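/- There exists k₀ > 1 such that for every k ≥ k₀ the following holds for W_k: there exist real numbers 0 < A₁ < A₂ such that for every A ∈ (A₁, A₂) the infimum of E(γ) over locally Lipschitz curves γ : [a,b] → ℝ² with γ(a) = (−1,0), γ(b) = (1,0) and 𝒜(γ) = A is not attained; moreover A₁ can be taken to be of order 1/√(k²−1) and A₂ → ∞ as k → ∞, so the interval of nonexistence becomes arbitrarily long for large k. -/

import Mathlib

open MeasureTheory Set Filter Topology
open scoped ENNReal

noncomputable section

/-- The Euclidean norm of a vector in `ℝ × ℝ`. -/
def enorm2 (v : ℝ × ℝ) : ℝ := Real.sqrt (v.1 ^ 2 + v.2 ^ 2)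

/-- The degenerate length `E(γ) = ∫ₐᵇ F(γ(t)) |γ'(t)| dt` of a planar curve. -/
def degLen (F : ℝ × ℝ → ℝ) (a b : ℝ) (γ : ℝ → ℝ × ℝ) : ℝ :=
  ∫ t in a..b, F (γ t) * enorm2 (deriv γ t)

/-- The signed area `𝒜(γ) = ∫ₐᵇ γ¹(t) (γ²)'(t) dt` of a planar curve. -/
def sArea (a b : ℝ) (γ : ℝ → ℝ × ℝ) : ℝ :=
  ∫ t in a..b, (γ t).1 * deriv (fun s => (γ s).2) t

/-- A locally Lipschitz curve on `[a,b]` joining `p` to `q`. -/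
def IsCurve (a b : ℝ) (γ : ℝ → ℝ × ℝ) (p q : ℝ × ℝ) : Prop :=
  a ≤ b ∧ LocallyLipschitz γ ∧ γ a = p ∧ γ b = q

/-- The radial profile `g_k`. -/
def gk (k r : ℝ) : ℝ := if r ≤ 1 then r ^ 2 + (k ^ 2 - 1) * r ^ 4 else k ^ 2

/-- The two-well potential `W_k`, radial about `(−1,0)` on the left half-plane and about
`(1,0)` on the right half-plane. -/
def Wk (k : ℝ) (p : ℝ × ℝ) : ℝ :=
  if p.1 ≤ 0 then gk k (enorm2 (p - (-1, 0))) else gk k (enorm2 (p - (1, 0)))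


lemma ll_ac {g : ℝ → ℝ} (hg : LocallyLipschitz g) (a b : ℝ) :
    AbsolutelyContinuousOnInterval g a b := by
  obtain ⟨K, hK⟩ := (hg.locallyLipschitzOn (s := uIcc a b)).exists_lipschitzOnWith_of_compact
    isCompact_uIcc
  exact hK.absolutelyContinuousOnInterval

lemma ll_fst {γ : ℝ → ℝ × ℝ} (h : LocallyLipschitz γ) : LocallyLipschitz (fun t => (γ t).1) :=
  (LipschitzWith.prod_fst.locallyLipschitz).comp h

lemma ll_snd {γ : ℝ → ℝ × ℝ} (h : LocallyLipschitz γ) : LocallyLipschitz (fun t => (γ t).2) :=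
  (LipschitzWith.prod_snd.locallyLipschitz).comp h

lemma ll_ae {g : ℝ → ℝ} (hg : LocallyLipschitz g) : ∀ᵐ t, DifferentiableAt ℝ g t := by
  have h : ∀ n : ℕ, ∀ᵐ t, t ∈ uIcc (-(n:ℝ)) n → DifferentiableAt ℝ g t :=
    fun n => (ll_ac hg _ _).ae_differentiableAt
  rw [← ae_all_iff] at h
  filter_upwards [h] with t ht
  obtain ⟨n, hn⟩ := exists_nat_ge |t|
  refine ht n ?_
  rw [uIcc_of_le (by linarith [Nat.cast_nonneg (α := ℝ) n])]
  exact abs_le.1 hn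

lemma gk_nonneg {k r : ℝ} (hk : 1 ≤ k) : 0 ≤ gk k r := by
  unfold gk
  split_ifs
  · have : 0 ≤ k ^ 2 - 1 := by nlinarith
    positivity
  · positivity

lemma gk_le {k r : ℝ} (hk : 1 ≤ k) (hr : 0 ≤ r) : gk k r ≤ k ^ 2 := by
  unfold gk
  split_ifs with h
  · have h0 : 0 ≤ k ^ 2 - 1 := by nlinarith
    have h1 : r ^ 2 ≤ 1 := by nlinarith
    have h2 : r ^ 4 ≤ 1 := by nlinarith [sq_nonneg r]
    nlinarith
  · exact le_rfl

lemma enorm2_nonneg (v : ℝ × ℝ) : 0 ≤ enorm2 v := Real.sqrt_nonneg _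

lemma Wk_nonneg {k : ℝ} (hk : 1 ≤ k) (p : ℝ × ℝ) : 0 ≤ Wk k p := by
  unfold Wk; split_ifs <;> exact gk_nonneg hk

lemma Wk_le {k : ℝ} (hk : 1 ≤ k) (p : ℝ × ℝ) : Wk k p ≤ k ^ 2 := by
  unfold Wk; split_ifs <;> exact gk_le hk (enorm2_nonneg _)

lemma sqrtWk_le {k : ℝ} (hk : 1 ≤ k) (p : ℝ × ℝ) : √(Wk k p) ≤ k := by
  rw [Real.sqrt_le_left (by linarith)]; exact Wk_le hk p

lemma meas_Wk (k : ℝ) : Measurable (Wk k) := by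
  have h1 : Measurable (gk k) := by
    unfold gk
    exact Measurable.ite measurableSet_Iic (by fun_prop) (by fun_prop)
  have h2 : Measurable enorm2 := by unfold enorm2; fun_prop
  unfold Wk
  exact Measurable.ite (measurableSet_le (by fun_prop) (by fun_prop)) (by fun_prop) (by fun_prop)

lemma enorm2_le (v : ℝ × ℝ) : enorm2 v ≤ |v.1| + |v.2| := by
  unfold enorm2
  rw [Real.sqrt_le_left (by positivity)]
  nlinarith [sq_abs v.1, sq_abs v.2, mul_nonneg (abs_nonneg v.1) (abs_nonneg v.2)]

lemma deriv_pair {γ : ℝ → ℝ × ℝ} {t : ℝ} (h1 : DifferentiableAt ℝ (fun t => (γ t).1) t)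
    (h2 : DifferentiableAt ℝ (fun t => (γ t).2) t) :
    deriv γ t = (deriv (fun t => (γ t).1) t, deriv (fun t => (γ t).2) t) :=
  (h1.hasDerivAt.prodMk h2.hasDerivAt).deriv

lemma ae_pair {γ : ℝ → ℝ × ℝ} (h : LocallyLipschitz γ) : ∀ᵐ t,
    DifferentiableAt ℝ (fun t => (γ t).1) t ∧ DifferentiableAt ℝ (fun t => (γ t).2) t ∧
    deriv γ t = (deriv (fun t => (γ t).1) t, deriv (fun t => (γ t).2) t) := by
  filter_upwards [ll_ae (ll_fst h), ll_ae (ll_snd h)] with t h1 h2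
  exact ⟨h1, h2, deriv_pair h1 h2⟩

lemma int_E {k : ℝ} (hk : 1 ≤ k) {γ : ℝ → ℝ × ℝ} (h : LocallyLipschitz γ) (a b : ℝ) :
    IntervalIntegrable (fun t => √(Wk k (γ t)) * enorm2 (deriv γ t)) volume a b := by
  have h1 := (ll_ac (ll_fst h) a b).intervalIntegrable_deriv
  have h2 := (ll_ac (ll_snd h) a b).intervalIntegrable_deriv
  have hi := (h1.abs.add h2.abs).const_mul k
  refine hi.mono_fun ?_ ?_
  · have e1 : Measurable (fun t => √(Wk k (γ t))) :=
      ((meas_Wk k).comp h.continuous.measurable).sqrt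
    have e2 : Measurable (fun t => enorm2 (deriv γ t)) := by
      have : Measurable enorm2 := by unfold enorm2; fun_prop
      exact this.comp (measurable_deriv γ)
    exact (e1.mul e2).aestronglyMeasurable
  · refine ae_restrict_of_ae ?_
    filter_upwards [ae_pair h] with t ht
    have e1 := sqrtWk_le hk (γ t)
    have e2 := enorm2_le (deriv γ t)
    have e3 := enorm2_nonneg (deriv γ t)
    rw [Real.norm_of_nonneg (by positivity)]
    refine le_trans ?_ (le_abs_self _)
    rw [ht.2.2] at *
    exact mul_le_mul e1 e2 e3 (by linarith)

lemma int_A {γ : ℝ → ℝ × ℝ} (h : LocallyLipschitz γ) (a b : ℝ) :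
    IntervalIntegrable (fun t => (γ t).1 * deriv (fun s => (γ s).2) t) volume a b := by
  have h2 := (ll_ac (ll_snd h) a b).intervalIntegrable_deriv
  exact h2.continuousOn_mul (ll_fst h).continuous.continuousOn

/-- Calibration lemma. -/
lemma calib {k : ℝ} (hk : 1 ≤ k) {γ : ℝ → ℝ × ℝ} (h : LocallyLipschitz γ) {a b : ℝ} (hab : a ≤ b)
    (l : ℝ) {Φ : ℝ → ℝ} (hΦ : LocallyLipschitz Φ)
    (H : ∀ t ∈ Ioo a b, ∀ v1 v2, HasDerivAt (fun t => (γ t).1) v1 t →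
      HasDerivAt (fun t => (γ t).2) v2 t →
      deriv Φ t + l * ((γ t).1 * v2) ≤ √(Wk k (γ t)) * √(v1 ^ 2 + v2 ^ 2)) :
    Φ b - Φ a + l * sArea a b γ ≤ degLen (fun p => √(Wk k p)) a b γ := by
  have h1 := (ll_ac hΦ a b)
  unfold sArea degLen
  rw [← h1.integral_deriv_eq_sub, ← intervalIntegral.integral_const_mul,
    ← intervalIntegral.integral_add h1.intervalIntegrable_deriv ((int_A h a b).const_mul l)]
  refine intervalIntegral.integral_mono_ae_restrict hab
    (h1.intervalIntegrable_deriv.add ((int_A h a b).const_mul l)) (int_E hk h a b) ?_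
  have hne : ∀ᵐ t : ℝ, t ≠ a ∧ t ≠ b := by
    have e1 : ∀ᵐ x : ℝ, x ≠ a := by simp [ae_iff, measure_singleton]
    have e2 : ∀ᵐ x : ℝ, x ≠ b := by simp [ae_iff, measure_singleton]
    filter_upwards [e1, e2] with x h1 h2 using ⟨h1, h2⟩
  filter_upwards [ae_restrict_mem measurableSet_Icc, ae_restrict_of_ae (ae_pair h),
    ae_restrict_of_ae hne] with t ht hp hn
  have := H t ⟨lt_of_le_of_ne ht.1 hn.1.symm, lt_of_le_of_ne ht.2 hn.2⟩ _ _
    hp.1.hasDerivAt hp.2.1.hasDerivAt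
  rw [hp.2.2]
  exact this

lemma degLen_add {k : ℝ} (hk : 1 ≤ k) {γ : ℝ → ℝ × ℝ} (h : LocallyLipschitz γ) (a b c : ℝ) :
    degLen (fun p => √(Wk k p)) a b γ + degLen (fun p => √(Wk k p)) b c γ
      = degLen (fun p => √(Wk k p)) a c γ :=
  intervalIntegral.integral_add_adjacent_intervals (int_E hk h a b) (int_E hk h b c)

lemma sArea_add {γ : ℝ → ℝ × ℝ} (h : LocallyLipschitz γ) (a b c : ℝ) :
    sArea a b γ + sArea b c γ = sArea a c γ :=
  intervalIntegral.integral_add_adjacent_intervals (int_A h a b) (int_A h b c)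

lemma degLen_nonneg (k : ℝ) (γ : ℝ → ℝ × ℝ) {a b : ℝ} (hab : a ≤ b) :
    0 ≤ degLen (fun p => √(Wk k p)) a b γ :=
  intervalIntegral.integral_nonneg hab
    (fun _ _ => mul_nonneg (Real.sqrt_nonneg _) (enorm2_nonneg _))

lemma last_cross {f : ℝ → ℝ} (hf : Continuous f) {a t d : ℝ} (hat : a ≤ t) (ha : f a ≤ d)
    (ht : d < f t) : ∃ s, a ≤ s ∧ s < t ∧ f s = d ∧ ∀ τ ∈ Ioc s t, d < f τ := by
  have hc : IsCompact (Icc a t ∩ {τ | f τ ≤ d}) :=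
    isCompact_Icc.inter_right (isClosed_le hf continuous_const)
  obtain ⟨s, hs, hmax⟩ := hc.exists_isGreatest ⟨a, ⟨le_rfl, hat⟩, ha⟩
  have hst : s < t := by
    rcases hs.1.2.lt_or_eq with h | h
    · exact h
    · exact absurd hs.2 (by rw [h]; simpa using ht)
  have hafter : ∀ τ ∈ Ioc s t, d < f τ := by
    intro τ hτ
    by_contra hcon
    push Not at hcon
    have := hmax ⟨⟨hs.1.1.trans hτ.1.le, hτ.2⟩, hcon⟩
    exact absurd hτ.1 (not_lt.2 this)
  refine ⟨s, hs.1.1, hst, ?_, hafter⟩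
  by_contra hne
  have hlt : f s < d := lt_of_le_of_ne hs.2 hne
  obtain ⟨u, hu, hud⟩ := intermediate_value_Ioc hst.le hf.continuousOn ⟨hlt, ht.le⟩
  exact absurd (hafter u hu) (by rw [hud]; simp)

lemma first_cross {f : ℝ → ℝ} (hf : Continuous f) {a t d : ℝ} (hat : a ≤ t) (ha : f a < d)
    (ht : d ≤ f t) : ∃ s, a < s ∧ s ≤ t ∧ f s = d ∧ ∀ τ ∈ Ico a s, f τ < d := by
  obtain ⟨s, h1, h2, h3, h4⟩ := last_cross (f := fun τ => - f (-τ)) (by fun_prop)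
    (a := -t) (t := -a) (d := -d) (by linarith) (by simpa using ht) (by simpa using ha)
  refine ⟨-s, by linarith, by linarith, by linarith, fun τ hτ => ?_⟩
  have := h4 (-τ) ⟨by linarith [hτ.2], by linarith [hτ.1]⟩
  simp only [neg_neg] at this
  linarith

lemma cs2 (e1 e2 v1 v2 : ℝ) (he : e1 ^ 2 + e2 ^ 2 = 1) : e1 * v1 + e2 * v2 ≤ √(v1 ^ 2 + v2 ^ 2) := by
  apply Real.le_sqrt_of_sq_le
  nlinarith [sq_nonneg (e1 * v2 - e2 * v1)]

lemma confine {k : ℝ} (hk : 1 ≤ k) {γ : ℝ → ℝ × ℝ} (h : LocallyLipschitz γ) {a b t : ℝ}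
    (hat : a ≤ t) (htb : t ≤ b) {e1 e2 d : ℝ} (he : e1 ^ 2 + e2 ^ 2 = 1)
    (hW : ∀ p : ℝ × ℝ, d < e1 * p.1 + e2 * p.2 → Wk k p = k ^ 2)
    (ha : e1 * (γ a).1 + e2 * (γ a).2 ≤ d) :
    k * (e1 * (γ t).1 + e2 * (γ t).2 - d) ≤ degLen (fun p => √(Wk k p)) a b γ := by
  by_cases hd : e1 * (γ t).1 + e2 * (γ t).2 ≤ d
  · exact le_trans (mul_nonpos_of_nonneg_of_nonpos (by linarith) (by linarith))
      (degLen_nonneg k γ (hat.trans htb))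
  push Not at hd
  have hc : Continuous (fun τ => e1 * (γ τ).1 + e2 * (γ τ).2) := by
    have := h.continuous
    fun_prop
  obtain ⟨s, h1, h2, h3, h4⟩ := last_cross hc hat ha hd
  have hΦ : LocallyLipschitz (fun τ => k * (e1 * (γ τ).1 + e2 * (γ τ).2)) := by
    have : ContDiff ℝ 1 (fun p : ℝ × ℝ => k * (e1 * p.1 + e2 * p.2)) := by fun_prop
    exact this.locallyLipschitz.comp h
  have key := calib hk h h2.le 0 hΦ (by
    intro τ hτ v1 v2 hv1 hv2
    have hD : HasDerivAt (fun τ => k * (e1 * (γ τ).1 + e2 * (γ τ).2)) (k * (e1 * v1 + e2 * v2)) τ :=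
      ((hv1.const_mul e1).add (hv2.const_mul e2)).const_mul k
    rw [hD.deriv, hW _ (h4 τ ⟨hτ.1, hτ.2.le⟩), Real.sqrt_sq (by linarith)]
    have := mul_le_mul_of_nonneg_left (cs2 e1 e2 v1 v2 he) (by linarith : 0 ≤ k)
    linarith)
  have i1 := degLen_add hk h a s t
  have i2 := degLen_add hk h a t b
  have i3 := degLen_nonneg k γ h1
  have i4 := degLen_nonneg k γ htb
  rw [h3] at key
  linarith

lemma gk_of_gt {k r : ℝ} (h : 1 < r) : gk k r = k ^ 2 := by
  unfold gk; rw [if_neg (by linarith)]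

lemma Wk_far {k : ℝ} {p : ℝ × ℝ} (h : 1 < (p.1 + 1) ^ 2 + p.2 ^ 2)
    (h' : 1 < (p.1 - 1) ^ 2 + p.2 ^ 2) : Wk k p = k ^ 2 := by
  unfold Wk
  split_ifs <;> apply gk_of_gt <;> unfold enorm2 <;> apply Real.lt_sqrt_of_sq_lt <;> simp
  · simpa using h
  · simpa using h'

lemma confine_box {k : ℝ} (hk : 1 ≤ k) {γ : ℝ → ℝ × ℝ} (h : LocallyLipschitz γ) {a b : ℝ}
    (ha : γ a = (-1, 0)) (hE : degLen (fun p => √(Wk k p)) a b γ ≤ 2 * k) :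
    ∀ t ∈ Icc a b, |(γ t).1| ≤ 4 ∧ |(γ t).2| ≤ 3 := by
  intro t ht
  have c1 := confine hk h ht.1 ht.2 (e1 := 1) (e2 := 0) (d := 2) (by norm_num)
    (fun p hp => Wk_far (by nlinarith [sq_nonneg p.2]) (by nlinarith [sq_nonneg p.2]))
    (by rw [ha]; norm_num)
  have c2 := confine hk h ht.1 ht.2 (e1 := -1) (e2 := 0) (d := 2) (by norm_num)
    (fun p hp => Wk_far (by nlinarith [sq_nonneg p.2]) (by nlinarith [sq_nonneg p.2]))
    (by rw [ha]; norm_num)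
  have c3 := confine hk h ht.1 ht.2 (e1 := 0) (e2 := 1) (d := 1) (by norm_num)
    (fun p hp => Wk_far (by nlinarith [sq_nonneg (p.1 + 1)]) (by nlinarith [sq_nonneg (p.1 - 1)]))
    (by rw [ha]; norm_num)
  have c4 := confine hk h ht.1 ht.2 (e1 := 0) (e2 := -1) (d := 1) (by norm_num)
    (fun p hp => Wk_far (by nlinarith [sq_nonneg (p.1 + 1)]) (by nlinarith [sq_nonneg (p.1 - 1)]))
    (by rw [ha]; norm_num)
  have hk0 : 0 < k := by linarith
  have aux : ∀ z : ℝ, k * z ≤ 2 * k → z ≤ 2 := fun z hz => by nlinarith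
  have d1 := aux _ (c1.trans hE)
  have d2 := aux _ (c2.trans hE)
  have d3 := aux _ (c3.trans hE)
  have d4 := aux _ (c4.trans hE)
  constructor <;> rw [abs_le] <;> constructor <;> linarith

lemma Wk_half {k σ : ℝ} (hσ : σ = 1 ∨ σ = -1) {p : ℝ × ℝ} (hp : σ * p.1 ≤ 0) :
    Wk k p = gk k √((p.1 + σ) ^ 2 + p.2 ^ 2) := by
  unfold Wk enorm2
  rcases hσ with rfl | rfl
  · rw [if_pos (by linarith)]; simp
  · split_ifs with h
    · have : p.1 = 0 := by linarith
      simp [this]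
    · simp [sub_eq_add_neg]

lemma gk_sqrt {k q : ℝ} (hq : 0 ≤ q) :
    gk k √q = if q ≤ 1 then q + (k ^ 2 - 1) * q ^ 2 else k ^ 2 := by
  unfold gk
  have h4 : √q ^ 4 = q ^ 2 := by
    rw [show √q ^ 4 = (√q ^ 2) ^ 2 by ring, Real.sq_sqrt hq]
  have h2 : √q ≤ 1 ↔ q ≤ 1 := by rw [Real.sqrt_le_left (by norm_num)]; simp
  simp only [h2, h4, Real.sq_sqrt hq]

/-- Radial coefficient. -/
def hh (k q : ℝ) : ℝ := √(min ((k ^ 2 - 1) * q) (k ^ 2 / max q 1 - 1))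

lemma hh_cont (k : ℝ) : Continuous (hh k) := by
  unfold hh
  have : ∀ q : ℝ, max q 1 ≠ 0 := fun q => by positivity
  fun_prop (disch := assumption)

lemma hh_nonneg (k q : ℝ) : 0 ≤ hh k q := Real.sqrt_nonneg _

lemma hh_sq_small {k q : ℝ} (hk : 1 ≤ k) (h0 : 0 ≤ q) (h1 : q ≤ 1) :
    hh k q ^ 2 = (k ^ 2 - 1) * q := by
  have hc : 0 ≤ k ^ 2 - 1 := by nlinarith
  unfold hh
  rw [max_eq_right h1, min_eq_left (by rw [div_one]; nlinarith), Real.sq_sqrt (by positivity)]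

lemma hh_sq_big {k q : ℝ} (hk : 1 ≤ k) (h1 : 1 ≤ q) (h2 : q ≤ k ^ 2) :
    hh k q ^ 2 = k ^ 2 / q - 1 := by
  have hc : 0 ≤ k ^ 2 - 1 := by nlinarith
  have h3 : k ^ 2 / q ≤ k ^ 2 := div_le_self (by positivity) h1
  have h4 : 1 ≤ k ^ 2 / q := by rw [le_div_iff₀ (by linarith)]; linarith
  unfold hh
  rw [max_eq_left h1, min_eq_right (by nlinarith), Real.sq_sqrt (by linarith)]

lemma hh_le {k q : ℝ} (hk : 1 ≤ k) (h0 : 0 ≤ q) : hh k q ≤ k * √q := by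
  have hc : 0 ≤ k ^ 2 - 1 := by nlinarith
  have : k * √q = √(k ^ 2 * q) := by
    rw [Real.sqrt_mul (by positivity), Real.sqrt_sq (by linarith)]
  rw [this]
  unfold hh
  apply Real.sqrt_le_sqrt
  refine (min_le_left _ _).trans ?_
  nlinarith

lemma hh_key {k q : ℝ} (hk : 1 ≤ k) (h0 : 0 ≤ q) (h2 : q ≤ k ^ 2) :
    q + hh k q ^ 2 * q = gk k √q := by
  rw [gk_sqrt h0]
  split_ifs with h
  · rw [hh_sq_small hk h0 h]; ring
  · push Not at h
    rw [hh_sq_big hk h.le h2]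
    have : q ≠ 0 := by linarith
    field_simp
    ring

/-- Radial primitive. -/
def HH (k q : ℝ) : ℝ := ∫ s in (0:ℝ)..q, hh k s / 2

lemma HH_deriv (k q : ℝ) : HasDerivAt (HH k) (hh k q / 2) q := by
  have hc : Continuous (fun s => hh k s / 2) := (hh_cont k).div_const 2
  exact intervalIntegral.integral_hasDerivAt_right (hc.intervalIntegrable _ _)
    hc.aestronglyMeasurable.stronglyMeasurableAtFilter hc.continuousAt

lemma HH_contDiff (k : ℝ) : ContDiff ℝ 1 (HH k) := by
  rw [contDiff_one_iff_deriv]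
  refine ⟨fun q => (HH_deriv k q).differentiableAt, ?_⟩
  have : deriv (HH k) = fun q => hh k q / 2 := funext fun q => (HH_deriv k q).deriv
  rw [this]
  exact (hh_cont k).div_const 2

lemma HH_zero (k : ℝ) : HH k 0 = 0 := by simp [HH]

/-- Calibration potential near a well. -/
def PhiS (k σ : ℝ) (p : ℝ × ℝ) : ℝ :=
  -(p.1 * p.2) + σ * (p.2 + HH k ((p.1 + σ) ^ 2 + p.2 ^ 2))

lemma PhiS_ll (k σ : ℝ) : LocallyLipschitz (PhiS k σ) := by
  have h1 := HH_contDiff k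
  have : ContDiff ℝ 1 (PhiS k σ) := by
    unfold PhiS
    fun_prop
  exact this.locallyLipschitz

lemma q_deriv {σ : ℝ} {x y : ℝ → ℝ} {v1 v2 t : ℝ} (h1 : HasDerivAt x v1 t)
    (h2 : HasDerivAt y v2 t) : HasDerivAt (fun s => (x s + σ) ^ 2 + y s ^ 2)
      (2 * ((x t + σ) * v1 + y t * v2)) t := by
  have := ((h1.add_const σ).pow 2).add (h2.pow 2)
  exact this.congr_deriv (by simp; ring)

lemma PhiS_deriv {k σ : ℝ} {γ : ℝ → ℝ × ℝ} {v1 v2 t : ℝ}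
    (h1 : HasDerivAt (fun t => (γ t).1) v1 t) (h2 : HasDerivAt (fun t => (γ t).2) v2 t) :
    HasDerivAt (fun s => PhiS k σ (γ s)) (-(v1 * (γ t).2 + (γ t).1 * v2) + σ * (v2 +
      hh k (((γ t).1 + σ) ^ 2 + (γ t).2 ^ 2) * (((γ t).1 + σ) * v1 + (γ t).2 * v2))) t := by
  have hq := q_deriv (σ := σ) h1 h2
  have hH := (HH_deriv k (((γ t).1 + σ) ^ 2 + (γ t).2 ^ 2)).comp t hq
  have := (h1.mul h2).neg.add ((h2.add hH).const_mul σ)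
  exact this.congr_deriv (by ring)

lemma cs_form {u1 u2 v1 v2 h q : ℝ} (hq : q = u1 ^ 2 + u2 ^ 2) :
    (√(q + h ^ 2 * q) * √(v1 ^ 2 + v2 ^ 2)) ^ 2 =
      ((u1 * v2 - u2 * v1) + h * (u1 * v1 + u2 * v2)) ^ 2
      + ((u1 * v1 + u2 * v2) - h * (u1 * v2 - u2 * v1)) ^ 2 := by
  rw [mul_pow, Real.sq_sqrt (by rw [hq]; positivity), Real.sq_sqrt (by positivity), hq]
  ring

lemma cs_form_le {u1 u2 v1 v2 h q : ℝ} (hq : q = u1 ^ 2 + u2 ^ 2) :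
    (u1 * v2 - u2 * v1) + h * (u1 * v1 + u2 * v2) ≤ √(q + h ^ 2 * q) * √(v1 ^ 2 + v2 ^ 2) := by
  apply le_of_sq_le_sq _ (by positivity)
  rw [cs_form hq]
  nlinarith [sq_nonneg ((u1 * v1 + u2 * v2) - h * (u1 * v2 - u2 * v1))]

lemma PhiS_point {k σ : ℝ} (hk : 10000 ≤ k) (hσ : σ = 1 ∨ σ = -1) {p : ℝ × ℝ} (hp : σ * p.1 ≤ 0)
    (hx : |p.1| ≤ 4) (hy : |p.2| ≤ 3) :
    Wk k p = ((p.1 + σ) ^ 2 + p.2 ^ 2)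
      + hh k ((p.1 + σ) ^ 2 + p.2 ^ 2) ^ 2 * ((p.1 + σ) ^ 2 + p.2 ^ 2) := by
  rw [Wk_half hσ hp, hh_key (by linarith) (by positivity)]
  rw [abs_le] at hx hy
  rcases hσ with rfl | rfl <;> nlinarith

lemma PhiS_le {k σ : ℝ} (hk : 10000 ≤ k) (hσ : σ = 1 ∨ σ = -1) {p : ℝ × ℝ} (hp : σ * p.1 ≤ 0)
    (hx : |p.1| ≤ 4) (hy : |p.2| ≤ 3) (v1 v2 : ℝ) :
    (-(v1 * p.2 + p.1 * v2) + σ * (v2 +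
      hh k ((p.1 + σ) ^ 2 + p.2 ^ 2) * ((p.1 + σ) * v1 + p.2 * v2))) + 2 * (p.1 * v2)
      ≤ √(Wk k p) * √(v1 ^ 2 + v2 ^ 2) := by
  rw [PhiS_point hk hσ hp hx hy]
  have := cs_form_le (u1 := p.1 + σ) (u2 := p.2) (v1 := v1) (v2 := v2)
    (h := σ * hh k ((p.1 + σ) ^ 2 + p.2 ^ 2)) rfl
  have hs : σ ^ 2 = 1 := by rcases hσ with rfl | rfl <;> norm_num
  rw [mul_pow, hs, one_mul] at this
  linarith

lemma calib_half {k σ : ℝ} (hk : 10000 ≤ k) (hσ : σ = 1 ∨ σ = -1) {γ : ℝ → ℝ × ℝ}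
    (h : LocallyLipschitz γ) {a b : ℝ} (hab : a ≤ b)
    (hbox : ∀ t ∈ Icc a b, |(γ t).1| ≤ 4 ∧ |(γ t).2| ≤ 3)
    (hx : ∀ t ∈ Icc a b, σ * (γ t).1 ≤ 0) :
    PhiS k σ (γ b) - PhiS k σ (γ a) + 2 * sArea a b γ ≤ degLen (fun p => √(Wk k p)) a b γ := by
  refine calib (by linarith) h hab 2 (Φ := fun t => PhiS k σ (γ t)) ((PhiS_ll k σ).comp h) ?_
  intro t ht v1 v2 h1 h2
  rw [(PhiS_deriv h1 h2).deriv]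
  have ht' := Ioo_subset_Icc_self ht
  exact PhiS_le hk hσ (hx t ht') (hbox t ht').1 (hbox t ht').2 v1 v2

/-- Odd interpolation polynomial. -/
def eta (x : ℝ) : ℝ := 23 / 16 * x - 5 / 8 * x ^ 3 + 3 / 16 * x ^ 5

def eta' (x : ℝ) : ℝ := 1 / 2 + 15 / 16 * (x ^ 2 - 1) ^ 2

lemma eta_deriv {x : ℝ → ℝ} {v t : ℝ} (h : HasDerivAt x v t) :
    HasDerivAt (fun s => eta (x s)) (eta' (x t) * v) t := by
  have := ((h.const_mul (23 / 16)).sub ((h.pow 3).const_mul (5 / 8))).add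
    ((h.pow 5).const_mul (3 / 16))
  exact this.congr_deriv (by unfold eta'; simp; ring)

lemma mid_pos {k x y : ℝ} (hk : 10000 ≤ k) (hx0 : 0 ≤ x) (hx : x ≤ 4) (hy : |y| ≤ 3) :
    (2 * y * eta' x) ^ 2 + (2 * (x - eta x)) ^ 2 ≤ gk k √((x - 1) ^ 2 + y ^ 2) := by
  rw [gk_sqrt (by positivity)]
  rw [abs_le] at hy
  split_ifs with h
  · obtain ⟨u, rfl⟩ : ∃ u, x = 1 + u := ⟨x - 1, by ring⟩
    have e : (1 + u - 1) = u := by ring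
    rw [e] at h ⊢
    have hu1 : u ≤ 1 := by nlinarith
    have hu2 : -1 ≤ u := by nlinarith
    have e1 : 2 * (1 + u - eta (1 + u)) = u - u ^ 3 * (5 / 2 + 15 / 8 * u + 3 / 8 * u ^ 2) := by
      unfold eta; ring
    have e2 : 2 * y * eta' (1 + u) = y * (1 + u ^ 2 * (15 / 8 * (2 + u) ^ 2)) := by
      unfold eta'; ring
    rw [e1, e2]
    have hu3 : u ^ 2 ≤ 1 := by nlinarith
    obtain ⟨P, hP⟩ : ∃ P, P = 5 / 2 + 15 / 8 * u + 3 / 8 * u ^ 2 := ⟨_, rfl⟩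
    obtain ⟨Q, hQ⟩ : ∃ Q, Q = 15 / 8 * (2 + u) ^ 2 := ⟨_, rfl⟩
    rw [← hP, ← hQ]
    have hP0 : 0 ≤ P := by nlinarith
    have hP1 : P ≤ 5 := by nlinarith
    have hQ0 : 0 ≤ Q := by nlinarith
    have hQ1 : Q ≤ 20 := by nlinarith
    have b1 : (u - u ^ 3 * P) ^ 2 ≤ u ^ 2 + 25 * u ^ 4 := by
      have : u ^ 2 * P ^ 2 ≤ 25 := by nlinarith [sq_nonneg u, sq_nonneg P]
      have h6 : u ^ 6 * P ^ 2 ≤ 25 * u ^ 4 := by nlinarith [sq_nonneg (u ^ 2)]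
      have h7 : 0 ≤ u ^ 4 * P := by positivity
      nlinarith
    have b2 : (y * (1 + u ^ 2 * Q)) ^ 2 ≤ y ^ 2 + 440 * (y ^ 2 * u ^ 2) := by
      have : 2 * Q + u ^ 2 * Q ^ 2 ≤ 440 := by nlinarith [sq_nonneg u, sq_nonneg Q]
      have h7 : 0 ≤ y ^ 2 * u ^ 2 := by positivity
      nlinarith
    have b3 : 440 * (u ^ 2 + y ^ 2) ^ 2 ≤ (k ^ 2 - 1) * (u ^ 2 + y ^ 2) ^ 2 := by
      apply mul_le_mul_of_nonneg_right _ (by positivity)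
      nlinarith
    nlinarith [sq_nonneg (y ^ 2), sq_nonneg (u ^ 2), sq_nonneg (y * u)]
  · have e1 : 0 ≤ eta' x := by unfold eta'; positivity
    have hx2 : x ^ 2 ≤ 16 := by nlinarith
    have e2 : eta' x ≤ 250 := by
      unfold eta'
      nlinarith [sq_nonneg x]
    have f1 : (2 * y * eta' x) ^ 2 ≤ 2250000 := by
      have : (2 * y * eta' x) ^ 2 = 4 * y ^ 2 * eta' x ^ 2 := by ring
      have g1 : y ^ 2 ≤ 9 := by nlinarith
      have g2 : eta' x ^ 2 ≤ 62500 := by nlinarith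
      nlinarith [sq_nonneg y, sq_nonneg (eta' x)]
    have f2 : |2 * (x - eta x)| ≤ 1000 := by
      have x3 : x ^ 3 ≤ 64 := by nlinarith
      have x5 : x ^ 5 ≤ 1024 := by nlinarith [pow_nonneg hx0 3]
      have := pow_nonneg hx0 3
      have := pow_nonneg hx0 5
      unfold eta
      rw [abs_le]; constructor <;> linarith
    have f3 : (2 * (x - eta x)) ^ 2 ≤ 1000000 := by
      rw [← sq_abs]; nlinarith [abs_nonneg (2 * (x - eta x))]
    nlinarith

lemma mid_all {k : ℝ} (hk : 10000 ≤ k) {p : ℝ × ℝ} (hx : |p.1| ≤ 4) (hy : |p.2| ≤ 3) :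
    (2 * p.2 * eta' p.1) ^ 2 + (2 * (p.1 - eta p.1)) ^ 2 ≤ Wk k p := by
  have hx' := abs_le.1 hx
  rcases le_total 0 p.1 with h | h
  · rw [Wk_half (σ := -1) (Or.inr rfl) (by linarith)]
    exact mid_pos hk h hx'.2 hy
  · rw [Wk_half (σ := 1) (Or.inl rfl) (by linarith)]
    have := mid_pos (x := -p.1) hk (by linarith) (by linarith) hy
    convert this using 1
    · unfold eta eta'; ring
    · congr 2; ring

lemma calib_mid {k : ℝ} (hk : 10000 ≤ k) {γ : ℝ → ℝ × ℝ}
    (h : LocallyLipschitz γ) {a b : ℝ} (hab : a ≤ b)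
    (hbox : ∀ t ∈ Icc a b, |(γ t).1| ≤ 4 ∧ |(γ t).2| ≤ 3)
    (ha : (γ a).1 = 0) (hb : (γ b).1 = 0) :
    2 * sArea a b γ ≤ degLen (fun p => √(Wk k p)) a b γ := by
  have hl : LocallyLipschitz (fun p : ℝ × ℝ => -(2 * p.2 * eta p.1)) := by
    have : ContDiff ℝ 1 (fun p : ℝ × ℝ => -(2 * p.2 * eta p.1)) := by
      unfold eta; fun_prop
    exact this.locallyLipschitz
  have key := calib (k := k) (by linarith) h hab 2
    (Φ := fun t => -(2 * (γ t).2 * eta (γ t).1)) (hl.comp h) (by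
    intro t ht v1 v2 h1 h2
    have hD : HasDerivAt (fun t => -(2 * (γ t).2 * eta (γ t).1))
        (-(2 * v2 * eta (γ t).1 + 2 * (γ t).2 * (eta' (γ t).1 * v1))) t :=
      ((h2.const_mul 2).mul (eta_deriv h1)).neg
    rw [hD.deriv]
    have ht' := Ioo_subset_Icc_self ht
    have := mid_all hk (hbox t ht').1 (hbox t ht').2
    have h3 := Real.sqrt_le_sqrt this
    refine le_trans ?_ (mul_le_mul_of_nonneg_right h3 (Real.sqrt_nonneg _))
    rw [← Real.sqrt_mul (by positivity)]
    apply Real.le_sqrt_of_sq_le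
    nlinarith [sq_nonneg (2 * (γ t).2 * eta' (γ t).1 * v2 + 2 * ((γ t).1 - eta (γ t).1) * v1)])
  simp only [ha, hb] at key
  have : eta 0 = 0 := by simp [eta]
  simp only [this, mul_zero] at key
  linarith

lemma eq_case {u1 u2 v1 v2 h q k K : ℝ} (hK : 0 ≤ K) (hq : q = u1 ^ 2 + u2 ^ 2)
    (hh0 : 0 ≤ h) (hhk : h ≤ k * √q) (h1 : |v1| ≤ K) (h2 : |v2| ≤ K)
    (heq : (u1 * v2 - u2 * v1) + h * (u1 * v1 + u2 * v2) = √(q + h ^ 2 * q) * √(v1 ^ 2 + v2 ^ 2)) :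
    2 * (u1 * v1 + u2 * v2) ≤ 4 * k * K * q := by
  have e := cs_form (v1 := v1) (v2 := v2) (h := h) hq
  rw [← heq] at e
  have e1 : (u1 * v1 + u2 * v2) - h * (u1 * v2 - u2 * v1) = 0 := by
    have : ((u1 * v1 + u2 * v2) - h * (u1 * v2 - u2 * v1)) ^ 2 = 0 := by linarith
    exact pow_eq_zero_iff (two_ne_zero) |>.1 this
  have hq0 : 0 ≤ q := by rw [hq]; positivity
  have hs := Real.sq_sqrt hq0
  have hs0 := Real.sqrt_nonneg q
  have h1' : v1 ^ 2 ≤ K ^ 2 := sq_le_sq' (abs_le.1 h1).1 (abs_le.1 h1).2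
  have h2' : v2 ^ 2 ≤ K ^ 2 := sq_le_sq' (abs_le.1 h2).1 (abs_le.1 h2).2
  have hcr : u1 * v2 - u2 * v1 ≤ 2 * K * √q := by
    apply le_of_sq_le_sq _ (by positivity)
    have : (2 * K * √q) ^ 2 = 4 * K ^ 2 * q := by rw [mul_pow, hs]; ring
    rw [this]
    have i1 : (u1 * v2 - u2 * v1) ^ 2 ≤ q * (v1 ^ 2 + v2 ^ 2) := by
      rw [hq]; nlinarith [sq_nonneg (u1 * v1 + u2 * v2)]
    have i2 : q * (v1 ^ 2 + v2 ^ 2) ≤ q * (2 * K ^ 2) :=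
      mul_le_mul_of_nonneg_left (by linarith) hq0
    nlinarith [sq_nonneg K]
  have i3 : h * (u1 * v2 - u2 * v1) ≤ h * (2 * K * √q) := mul_le_mul_of_nonneg_left hcr hh0
  have i4 : h * (2 * K * √q) ≤ (k * √q) * (2 * K * √q) :=
    mul_le_mul_of_nonneg_right hhk (by positivity)
  have i5 : (k * √q) * (2 * K * √q) = 2 * k * K * q := by
    calc (k * √q) * (2 * K * √q) = 2 * k * K * √q ^ 2 := by ring
      _ = _ := by rw [hs]
  nlinarith

lemma gronwall_ll {q : ℝ → ℝ} (hq : LocallyLipschitz q) {a b M : ℝ} (hab : a ≤ b)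
    (h : ∀ᵐ t ∂(volume.restrict (Ioc a b)), deriv q t ≤ M * q t) (ha : q a = 0) : q b ≤ 0 := by
  have hl : LocallyLipschitz (fun t => q t * Real.exp (-M * t)) := by
    have h1 : ContDiff ℝ 1 (fun p : ℝ × ℝ => p.1 * Real.exp (-M * p.2)) := by fun_prop
    exact h1.locallyLipschitz.comp (hq.prodMk LocallyLipschitz.id)
  have h1 := (ll_ac hl a b).integral_deriv_eq_sub
  have h2 : ∫ t in a..b, deriv (fun t => q t * Real.exp (-M * t)) t ≤ 0 := by
    rw [intervalIntegral.integral_of_le hab]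
    apply integral_nonpos_of_ae
    filter_upwards [h, ae_restrict_of_ae (ll_ae hq)] with t ht hd
    have e1 : HasDerivAt (fun t => Real.exp (-M * t)) (Real.exp (-M * t) * (-M)) t := by
      have := ((hasDerivAt_id t).const_mul (-M)).exp
      simpa using this
    have e2 : HasDerivAt (fun t => q t * Real.exp (-M * t))
        (deriv q t * Real.exp (-M * t) + q t * (Real.exp (-M * t) * (-M))) t :=
      hd.hasDerivAt.mul e1
    rw [e2.deriv]
    have := Real.exp_pos (-M * t)
    simp only [Pi.zero_apply]
    nlinarith
  rw [h1, ha, zero_mul, sub_zero] at h2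
  have := Real.exp_pos (-M * b)
  by_contra hcon
  push Not at hcon
  nlinarith [mul_pos hcon this]

lemma strict_left {k : ℝ} (hk : 10000 ≤ k) {γ : ℝ → ℝ × ℝ}
    (h : LocallyLipschitz γ) {a b : ℝ} (hab : a ≤ b)
    (hbox : ∀ t ∈ Icc a b, |(γ t).1| ≤ 4 ∧ |(γ t).2| ≤ 3)
    (hx : ∀ t ∈ Icc a b, (γ t).1 ≤ 0) (ha : γ a = (-1, 0)) (hb : (γ b).1 = 0) :
    PhiS k 1 (γ b) - PhiS k 1 (γ a) + 2 * sArea a b γ < degLen (fun p => √(Wk k p)) a b γ := by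
  have hle := calib_half hk (σ := 1) (Or.inl rfl) h hab hbox (by simpa using hx)
  refine lt_of_le_of_ne hle fun heq => ?_
  have hl : LocallyLipschitz (fun t => PhiS k 1 (γ t)) := (PhiS_ll k 1).comp h
  have h1 := ll_ac hl a b
  have hi := (h1.intervalIntegrable_deriv.add ((int_A h a b).const_mul 2))
  have hE := int_E (k := k) (by linarith) h a b
  unfold sArea degLen at heq
  rw [← h1.integral_deriv_eq_sub, ← intervalIntegral.integral_const_mul,
    ← intervalIntegral.integral_add h1.intervalIntegrable_deriv ((int_A h a b).const_mul 2),
    eq_comm, ← sub_eq_zero, ← intervalIntegral.integral_sub hE hi,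
    intervalIntegral.integral_eq_zero_iff_of_le_of_nonneg_ae hab ?_ (hE.sub hi)] at heq
  · obtain ⟨K, hK⟩ := (h.locallyLipschitzOn
      (s := Icc (a - 1) (b + 1))).exists_lipschitzOnWith_of_compact isCompact_Icc
    have hqll : LocallyLipschitz (fun t => ((γ t).1 + 1) ^ 2 + (γ t).2 ^ 2) := by
      have : ContDiff ℝ 1 (fun p : ℝ × ℝ => (p.1 + 1) ^ 2 + p.2 ^ 2) := by fun_prop
      exact this.locallyLipschitz.comp h
    have hg := gronwall_ll hqll (M := 4 * k * K) hab (by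
      filter_upwards [ae_restrict_mem measurableSet_Ioc, ae_restrict_of_ae (ae_pair h), heq]
        with t ht hp ht0
      have ht' := Ioc_subset_Icc_self ht
      have d1 := hp.1.hasDerivAt
      have d2 := hp.2.1.hasDerivAt
      rw [(q_deriv d1 d2).deriv]
      have hnb : Icc (a - 1) (b + 1) ∈ 𝓝 t :=
        Icc_mem_nhds (by linarith [ht.1]) (by linarith [ht.2])
      have n0 := norm_deriv_le_of_lipschitzOn hnb hK
      rw [hp.2.2] at n0
      have n1 := (norm_fst_le _).trans n0
      have n2 := (norm_snd_le _).trans n0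
      refine eq_case K.2 rfl (hh_nonneg k _) (hh_le (by linarith) (by positivity))
        n1 n2 ?_
      simp only [Pi.zero_apply] at ht0
      rw [hp.2.2, (PhiS_deriv d1 d2).deriv, PhiS_point hk (σ := 1) (Or.inl rfl)
        (by simpa using hx t ht') (hbox t ht').1 (hbox t ht').2] at ht0
      unfold enorm2 at ht0
      simp only [] at ht0
      linarith) (by simp [ha])
    simp only [hb] at hg
    nlinarith [sq_nonneg (γ b).2]
  · filter_upwards [ae_restrict_mem measurableSet_Ioc, ae_restrict_of_ae (ae_pair h)] with t ht hp
    have ht' := Ioc_subset_Icc_self ht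
    rw [hp.2.2, (PhiS_deriv hp.1.hasDerivAt hp.2.1.hasDerivAt).deriv]
    have := PhiS_le hk (σ := 1) (Or.inl rfl)
        (by simpa using hx t ht') (hbox t ht').1 (hbox t ht').2
        (deriv (fun t => (γ t).1) t) (deriv (fun t => (γ t).2) t)
    simp only [Pi.zero_apply]
    unfold enorm2
    linarith

/-- Transit value. -/
def YY (k y : ℝ) : ℝ := y + HH k (1 + y ^ 2)

lemma lower {k : ℝ} (hk : 10000 ≤ k) {γ : ℝ → ℝ × ℝ} {a b : ℝ} (hγ : IsCurve a b γ (-1, 0) (1, 0))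
    (hE : degLen (fun p => √(Wk k p)) a b γ ≤ 2 * k) {m : ℝ} (hm : ∀ y ∈ Icc (-3:ℝ) 3, m ≤ YY k y) :
    2 * m + 2 * sArea a b γ < degLen (fun p => √(Wk k p)) a b γ := by
  obtain ⟨hab, h, ha, hb⟩ := hγ
  have hk1 : 1 ≤ k := by linarith
  have hbox := confine_box hk1 h ha hE
  have hc := (ll_fst h).continuous
  obtain ⟨s, s1, s2, s3, s4⟩ := first_cross hc (d := 0) hab (by simp [ha]) (by simp [hb])
  obtain ⟨r, r1, r2, r3, r4⟩ := last_cross hc (d := 0) s2 (by simp [s3]) (by simp [hb])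
  have b1 : ∀ t ∈ Icc a s, |(γ t).1| ≤ 4 ∧ |(γ t).2| ≤ 3 :=
    fun t ht => hbox t ⟨ht.1, ht.2.trans s2⟩
  have b2 : ∀ t ∈ Icc s r, |(γ t).1| ≤ 4 ∧ |(γ t).2| ≤ 3 :=
    fun t ht => hbox t ⟨s1.le.trans ht.1, ht.2.trans r2.le⟩
  have b3 : ∀ t ∈ Icc r b, |(γ t).1| ≤ 4 ∧ |(γ t).2| ≤ 3 :=
    fun t ht => hbox t ⟨s1.le.trans (r1.trans ht.1), ht.2⟩
  have k1 := strict_left hk h s1.le b1 (by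
    intro t ht
    rcases ht.2.lt_or_eq with h' | h'
    · exact (s4 t ⟨ht.1, h'⟩).le
    · rw [h', s3]) ha s3
  have k2 := calib_mid hk h r1 b2 s3 r3
  have k3 := calib_half hk (σ := -1) (Or.inr rfl) h r2.le b3 (by
    intro t ht
    rcases ht.1.lt_or_eq with h' | h'
    · have := r4 t ⟨h', ht.2⟩
      linarith
    · rw [← h', r3]; simp)
  have e1 := degLen_add hk1 h a s r
  have e2 := degLen_add hk1 h a r b
  have e3 := sArea_add h a s r
  have e4 := sArea_add h a r b
  have m1 := hm _ (abs_le.1 (hbox s ⟨s1.le, s2⟩).2)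
  have m2 := hm _ (abs_le.1 (hbox r ⟨s1.le.trans r1, r2.le⟩).2)
  have p1 : PhiS k 1 (γ a) = 0 := by rw [ha]; simp [PhiS, HH_zero]
  have p2 : PhiS k (-1) (γ b) = 0 := by rw [hb]; simp [PhiS, HH_zero]
  have p3 : PhiS k 1 (γ s) = YY k (γ s).2 := by simp [PhiS, YY, s3]
  have p4 : PhiS k (-1) (γ r) = - YY k (γ r).2 := by simp [PhiS, YY, r3]
  rw [p1, p3] at k1
  rw [p2, p4] at k3
  linarith

lemma gk_mono {k r s : ℝ} (hk : 1 ≤ k) (h0 : 0 ≤ r) (h : r ≤ s) : gk k r ≤ gk k s := by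
  by_cases hs : s ≤ 1
  · have hc : 0 ≤ k ^ 2 - 1 := by nlinarith
    unfold gk
    rw [if_pos hs, if_pos (h.trans hs)]
    gcongr
  · rw [gk_of_gt (not_le.1 hs)]
    exact gk_le hk h0

lemma Wk_le_gk {k σ s : ℝ} (hk : 1 ≤ k) (hσ : σ = 1 ∨ σ = -1) {p : ℝ × ℝ} (hs0 : 0 ≤ s)
    (hs : (p.1 + σ) ^ 2 + p.2 ^ 2 = s ^ 2) : Wk k p ≤ gk k s := by
  have e : √((p.1 + σ) ^ 2 + p.2 ^ 2) = s := by rw [hs, Real.sqrt_sq hs0]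
  by_cases hp : σ * p.1 ≤ 0
  · rw [Wk_half hσ hp, e]
  · push Not at hp
    have hσ' : -σ = 1 ∨ -σ = -1 := by rcases hσ with rfl | rfl <;> simp
    rw [Wk_half hσ' (by linarith)]
    apply gk_mono hk (Real.sqrt_nonneg _)
    rw [Real.sqrt_le_left hs0, ← hs]
    nlinarith

lemma gk_cont (k : ℝ) : Continuous (gk k) := by
  unfold gk
  refine Continuous.if_le (by fun_prop) (by fun_prop) continuous_id continuous_const ?_
  intro x hx
  rw [hx]; ring

lemma snd_hd {γ : ℝ → ℝ × ℝ} {v : ℝ × ℝ} {t : ℝ} (h : HasDerivAt γ v t) :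
    HasDerivAt (fun s => (γ s).2) v.2 t :=
  (hasFDerivAt_snd (𝕜 := ℝ) (E := ℝ) (F := ℝ) (p := γ t)).comp_hasDerivAt t h

lemma spiral {k : ℝ} (hk : 1 ≤ k) {r y : ℝ} (hr : 0 < r) (hry : r ^ 2 = 1 + y ^ 2)
    {κ : ℝ → ℝ} (hκ : Continuous κ) : ∃ γ : ℝ → ℝ × ℝ, IsCurve (-r) r γ (-1, 0) (1, 0) ∧
      sArea (-r) r γ = (∫ s in (0:ℝ)..r, s ^ 2 * κ s) - y ∧
      degLen (fun p => √(Wk k p)) (-r) r γ ≤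
        2 * ∫ s in (0:ℝ)..r, √(gk k s) * √(1 + s ^ 2 * κ s ^ 2) := by
  obtain ⟨θ, hθ⟩ : ∃ θ : ℝ → ℝ, θ = fun s => Real.arctan y + ∫ u in r..s, κ u := ⟨_, rfl⟩
  have hθd : ∀ s, HasDerivAt θ (κ s) s := by
    intro s
    rw [hθ]
    exact (intervalIntegral.integral_hasDerivAt_right (hκ.intervalIntegrable _ _)
      hκ.aestronglyMeasurable.stronglyMeasurableAtFilter hκ.continuousAt).const_add _
  have hθc : ContDiff ℝ 1 θ := by
    rw [contDiff_one_iff_deriv]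
    refine ⟨fun q => (hθd q).differentiableAt, ?_⟩
    rwa [funext fun q => (hθd q).deriv]
  have hθr : θ r = Real.arctan y := by simp [hθ]
  have hrs : √(1 + y ^ 2) = r := by rw [← hry, Real.sqrt_sq hr.le]
  have hcos : Real.cos (θ r) = 1 / r := by rw [hθr, Real.cos_arctan, hrs]
  have hsin : Real.sin (θ r) = y / r := by rw [hθr, Real.sin_arctan, hrs]
  obtain ⟨X, hX⟩ : ∃ X : ℝ → ℝ, X = fun s => -1 + s * Real.cos (θ s) := ⟨_, rfl⟩
  obtain ⟨Y, hY⟩ : ∃ Y : ℝ → ℝ, Y = fun s => s * Real.sin (θ s) := ⟨_, rfl⟩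
  obtain ⟨X', hX'⟩ : ∃ X' : ℝ → ℝ, X' = fun s => Real.cos (θ s) - s * Real.sin (θ s) * κ s :=
    ⟨_, rfl⟩
  obtain ⟨Y', hY'⟩ : ∃ Y' : ℝ → ℝ, Y' = fun s => Real.sin (θ s) + s * Real.cos (θ s) * κ s :=
    ⟨_, rfl⟩
  have hXd : ∀ s, HasDerivAt X (X' s) s := by
    intro s
    rw [hX, hX']
    have := ((hasDerivAt_id s).mul (hθd s).cos).const_add (-1)
    exact this.congr_deriv (by simp; ring)
  have hYd : ∀ s, HasDerivAt Y (Y' s) s := by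
    intro s
    rw [hY, hY']
    have := ((hasDerivAt_id s).mul (hθd s).sin)
    exact this.congr_deriv (by simp; ring)
  have hXl : LocallyLipschitz X := by
    have : ContDiff ℝ 1 X := by rw [hX]; fun_prop
    exact this.locallyLipschitz
  have hYl : LocallyLipschitz Y := by
    have : ContDiff ℝ 1 Y := by rw [hY]; fun_prop
    exact this.locallyLipschitz
  have hθcont := hθc.continuous
  have hXc := hXl.continuous
  have hYc := hYl.continuous
  have hX'c : Continuous X' := by rw [hX']; fun_prop
  have hY'c : Continuous Y' := by rw [hY']; fun_prop
  have hX0 : X 0 = -1 := by simp [hX]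
  have hY0 : Y 0 = 0 := by simp [hY]
  have hXr : X r = 0 := by simp only [hX, hcos]; field_simp; ring
  have hYr : Y r = y := by simp only [hY, hsin]; field_simp
  have hXY : ∀ s, (X s + 1) ^ 2 + Y s ^ 2 = s ^ 2 := by
    intro s
    simp only [hX, hY]
    linear_combination s ^ 2 * Real.sin_sq_add_cos_sq (θ s)
  have hV : ∀ s, X' s ^ 2 + Y' s ^ 2 = 1 + s ^ 2 * κ s ^ 2 := by
    intro s
    simp only [hX', hY']
    linear_combination (1 + s ^ 2 * κ s ^ 2) * Real.sin_sq_add_cos_sq (θ s)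
  have hC : ∀ s, (X s + 1) * Y' s - Y s * X' s = s ^ 2 * κ s := by
    intro s
    simp only [hX', hY', hX, hY]
    linear_combination (s ^ 2 * κ s) * Real.sin_sq_add_cos_sq (θ s)
  -- the area integral
  have hA : 2 * ∫ s in (0:ℝ)..r, X s * Y' s = (∫ s in (0:ℝ)..r, s ^ 2 * κ s) - y := by
    have e1 : ∀ s, HasDerivAt (fun s => X s * Y s - Y s) (X' s * Y s + X s * Y' s - Y' s) s :=
      fun s => ((hXd s).mul (hYd s)).sub (hYd s)
    have e2 := intervalIntegral.integral_eq_sub_of_hasDerivAt (a := 0) (b := r) (fun s _ => e1 s)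
      ((by fun_prop : Continuous fun s => X' s * Y s + X s * Y' s - Y' s).intervalIntegrable _ _)
    simp only [hX0, hY0, hXr, hYr] at e2
    rw [← intervalIntegral.integral_const_mul]
    have e3 : ∀ s, 2 * (X s * Y' s) = s ^ 2 * κ s + (X' s * Y s + X s * Y' s - Y' s) := by
      intro s; rw [← hC]; ring
    simp only [e3]
    rw [intervalIntegral.integral_add
      ((by fun_prop : Continuous fun s => s ^ 2 * κ s).intervalIntegrable _ _)
      ((by fun_prop : Continuous fun s => X' s * Y s + X s * Y' s - Y' s).intervalIntegrable _ _),
      e2]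
    ring
  obtain ⟨γ, hγ⟩ : ∃ γ : ℝ → ℝ × ℝ, γ = fun t =>
    (X (r + min t 0) - X (r - max t 0), Y (r + min t 0) + Y (r - max t 0) - y) := ⟨_, rfl⟩
  have l1 : LocallyLipschitz (fun t : ℝ => r + min t 0) :=
    ((by fun_prop : ContDiff ℝ 1 (fun u : ℝ => r + u)).locallyLipschitz).comp
      (LocallyLipschitz.id.min_const 0)
  have l2 : LocallyLipschitz (fun t : ℝ => r - max t 0) :=
    ((by fun_prop : ContDiff ℝ 1 (fun u : ℝ => r - u)).locallyLipschitz).comp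
      (LocallyLipschitz.id.max_const 0)
  have hγl : LocallyLipschitz γ := by
    rw [hγ]
    have c1 : LocallyLipschitz (fun p : ℝ × ℝ => p.1 - p.2) :=
      (by fun_prop : ContDiff ℝ 1 (fun p : ℝ × ℝ => p.1 - p.2)).locallyLipschitz
    have c2 : LocallyLipschitz (fun p : ℝ × ℝ => p.1 + p.2 - y) :=
      (by fun_prop : ContDiff ℝ 1 (fun p : ℝ × ℝ => p.1 + p.2 - y)).locallyLipschitz
    exact (c1.comp ((hXl.comp l1).prodMk (hXl.comp l2))).prodMk
      (c2.comp ((hYl.comp l1).prodMk (hYl.comp l2)))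
  have g1 : ∀ t, t ≤ 0 → γ t = (X (r + t), Y (r + t)) := by
    intro t ht
    simp [hγ, min_eq_left ht, max_eq_right ht, hXr, hYr]
  have g2 : ∀ t, 0 ≤ t → γ t = (-X (r - t), Y (r - t)) := by
    intro t ht
    simp [hγ, min_eq_right ht, max_eq_left ht, hXr, hYr]
  have d1 : ∀ t, t < 0 → HasDerivAt γ (X' (r + t), Y' (r + t)) t := by
    intro t ht
    have : HasDerivAt (fun t => (X (r + t), Y (r + t))) (X' (r + t), Y' (r + t)) t :=
      ((hXd (r + t)).comp_const_add r t).prodMk ((hYd (r + t)).comp_const_add r t)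
    refine this.congr_of_eventuallyEq ?_
    filter_upwards [Iio_mem_nhds ht] with s hs using g1 s (le_of_lt hs)
  have d2 : ∀ t, 0 < t → HasDerivAt γ (X' (r - t), -Y' (r - t)) t := by
    intro t ht
    have : HasDerivAt (fun t => (-X (r - t), Y (r - t))) (X' (r - t), -Y' (r - t)) t := by
      have a1 := ((hXd (r - t)).comp_const_sub r t).neg
      rw [neg_neg] at a1
      exact a1.prodMk ((hYd (r - t)).comp_const_sub r t)
    refine this.congr_of_eventuallyEq ?_
    filter_upwards [Ioi_mem_nhds ht] with s hs using g2 s (le_of_lt hs)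
  refine ⟨γ, ⟨by linarith, hγl, ?_, ?_⟩, ?_, ?_⟩
  · rw [g1 _ (by linarith)]; simp [hX0, hY0]
  · rw [g2 _ (by linarith)]; simp [hX0, hY0]
  · rw [← sArea_add hγl (-r) 0 r, ← hA]
    have a1 : sArea (-r) 0 γ = ∫ s in (0:ℝ)..r, X s * Y' s := by
      have := intervalIntegral.integral_comp_add_left (a := -r) (b := 0)
        (fun s => X s * Y' s) r
      simp only [add_neg_cancel, add_zero] at this
      rw [← this]
      unfold sArea
      refine intervalIntegral.integral_congr_Ioo_of_le (by linarith) fun t ht => ?_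
      have h3 : HasDerivAt (fun s => (γ s).2) (Y' (r + t)) t :=
        snd_hd (d1 t ht.2)
      beta_reduce
      rw [g1 t ht.2.le, h3.deriv]
    have a2 : sArea 0 r γ = ∫ s in (0:ℝ)..r, X s * Y' s := by
      have := intervalIntegral.integral_comp_sub_left (a := 0) (b := r)
        (fun s => X s * Y' s) r
      simp only [sub_self, sub_zero] at this
      rw [← this]
      unfold sArea
      refine intervalIntegral.integral_congr_Ioo_of_le (by linarith) fun t ht => ?_
      have h3 : HasDerivAt (fun s => (γ s).2) (-Y' (r - t)) t :=
        snd_hd (d2 t ht.1)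
      beta_reduce
      rw [g2 t ht.1.le, h3.deriv]
      ring
    rw [a1, a2]; ring
  · have gc := gk_cont k
    obtain ⟨f, hf⟩ : ∃ f : ℝ → ℝ, f = fun s => √(gk k s) * √(1 + s ^ 2 * κ s ^ 2) := ⟨_, rfl⟩
    have fc : Continuous f := by rw [hf]; fun_prop
    have a1 : degLen (fun p => √(Wk k p)) (-r) 0 γ ≤ ∫ s in (0:ℝ)..r, f s := by
      have := intervalIntegral.integral_comp_add_left (a := -r) (b := 0) f r
      simp only [add_neg_cancel, add_zero] at this
      rw [← this]
      unfold degLen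
      refine intervalIntegral.integral_mono_on_of_le_Ioo (by linarith) (int_E hk hγl _ _)
        ((by fun_prop : Continuous fun t => f (r + t)).intervalIntegrable _ _) fun t ht => ?_
      rw [(d1 t ht.2).deriv, g1 t ht.2.le, hf]
      simp only [enorm2, hV]
      refine mul_le_mul_of_nonneg_right (Real.sqrt_le_sqrt ?_) (Real.sqrt_nonneg _)
      exact Wk_le_gk (σ := 1) hk (Or.inl rfl) (by linarith [ht.1]) (hXY _)
    have a2 : degLen (fun p => √(Wk k p)) 0 r γ ≤ ∫ s in (0:ℝ)..r, f s := by
      have := intervalIntegral.integral_comp_sub_left (a := 0) (b := r) f r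
      simp only [sub_self, sub_zero] at this
      rw [← this]
      unfold degLen
      refine intervalIntegral.integral_mono_on_of_le_Ioo (by linarith) (int_E hk hγl _ _)
        ((by fun_prop : Continuous fun t => f (r - t)).intervalIntegrable _ _) fun t ht => ?_
      rw [(d2 t ht.1).deriv, g2 t ht.1.le, hf]
      simp only [enorm2, neg_sq, hV]
      refine mul_le_mul_of_nonneg_right (Real.sqrt_le_sqrt ?_) (Real.sqrt_nonneg _)
      refine Wk_le_gk (σ := -1) hk (Or.inr rfl) (by linarith [ht.2]) ?_
      have := hXY (r - t)
      simp only
      linarith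
    rw [← degLen_add hk hγl (-r) 0 r]
    simp only [hf] at a1 a2
    linarith

lemma cc_facts {k : ℝ} (hk : 10000 ≤ k) :
    0 < √(k ^ 2 - 1) ∧ √(k ^ 2 - 1) ^ 2 = k ^ 2 - 1 ∧ 9000 ≤ √(k ^ 2 - 1) := by
  have h1 : 9000 ≤ √(k ^ 2 - 1) := by
    apply Real.le_sqrt_of_sq_le; nlinarith
  exact ⟨by linarith, Real.sq_sqrt (by nlinarith), h1⟩

lemma hh_lb {k q : ℝ} (hk : 10000 ≤ k) (h1 : 1 ≤ q) (h2 : q ≤ 10) :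
    √(k ^ 2 - 1) / 4 ≤ hh k q := by
  obtain ⟨c0, c1, c2⟩ := cc_facts hk
  have e := hh_sq_big (k := k) (q := q) (by linarith) h1 (by nlinarith)
  have e2 : k ^ 2 / 10 ≤ k ^ 2 / q := by gcongr
  have := hh_nonneg k q
  by_contra! hcon
  nlinarith

lemma HH_lb {k q : ℝ} (hk : 10000 ≤ k) (h1 : 1 ≤ q) (h2 : q ≤ 10) :
    (q - 1) * (√(k ^ 2 - 1) / 8) ≤ HH k q - HH k 1 := by
  have hc : Continuous (fun s => hh k s / 2) := (hh_cont k).div_const 2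
  unfold HH
  rw [intervalIntegral.integral_interval_sub_left (hc.intervalIntegrable _ _)
    (hc.intervalIntegrable _ _)]
  have : ∫ s in (1:ℝ)..q, √(k ^ 2 - 1) / 8 = (q - 1) * (√(k ^ 2 - 1) / 8) := by simp; ring
  rw [← this]
  refine intervalIntegral.integral_mono_on h1 (by simp) (hc.intervalIntegrable _ _) fun s hs => ?_
  have := hh_lb hk hs.1 (hs.2.trans h2)
  linarith

lemma ys_facts {k y : ℝ} (hk : 10000 ≤ k) (hy : y ∈ Icc (-3:ℝ) 3) (h : YY k y ≤ YY k 0) :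
    y ≤ 0 ∧ -y ≤ 8 / √(k ^ 2 - 1) := by
  obtain ⟨c0, c1, c2⟩ := cc_facts hk
  have e := HH_lb (k := k) (q := 1 + y ^ 2) hk (by nlinarith) (by nlinarith [hy.1, hy.2])
  have h0 : YY k 0 = HH k 1 := by simp [YY]
  rw [h0] at h
  unfold YY at h
  have e3 : y + y ^ 2 * (√(k ^ 2 - 1) / 8) ≤ 0 := by
    have : 1 + y ^ 2 - 1 = y ^ 2 := by ring
    rw [this] at e
    linarith
  have hy0 : y ≤ 0 := by
    have : 0 ≤ y ^ 2 * (√(k ^ 2 - 1) / 8) := by positivity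
    linarith
  refine ⟨hy0, ?_⟩
  rw [le_div_iff₀ c0]
  rcases hy0.eq_or_lt with rfl | hlt
  · simp
  · by_contra! hcon
    nlinarith

lemma ff_lb {k s : ℝ} (hk : 10000 ≤ k) (h0 : 0 ≤ s) (h2 : s ^ 2 ≤ 2) :
    s ^ 2 * √(k ^ 2 - 1) ≤ 8 * (hh k (s ^ 2) * s) := by
  obtain ⟨c0, c1, c2⟩ := cc_facts hk
  by_cases h1 : s ≤ 1
  · have e := hh_sq_small (k := k) (q := s ^ 2) (by linarith) (by positivity) (by nlinarith)
    have : hh k (s ^ 2) = √(k ^ 2 - 1) * s := by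
      rw [← c1, ← mul_pow] at e
      exact (pow_left_inj₀ (hh_nonneg _ _) (by positivity) two_ne_zero).1 e
    rw [this]
    have : 0 ≤ s ^ 2 * √(k ^ 2 - 1) := by positivity
    nlinarith
  · push Not at h1
    have e := hh_lb (k := k) (q := s ^ 2) hk (by nlinarith) (by linarith)
    have e2 : s ≤ 2 := by nlinarith
    have e3 : √(k ^ 2 - 1) / 4 * s ≤ hh k (s ^ 2) * s := by gcongr
    have e4 : s * (s * √(k ^ 2 - 1)) ≤ 2 * (s * √(k ^ 2 - 1)) := by gcongr
    nlinarith

lemma ff_pos {k s : ℝ} (hk : 10000 ≤ k) (h0 : 0 < s) (h2 : s ^ 2 ≤ 2) :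
    0 < hh k (s ^ 2) * s := by
  obtain ⟨c0, c1, c2⟩ := cc_facts hk
  have := ff_lb hk h0.le h2
  have : 0 < s ^ 2 * √(k ^ 2 - 1) := by positivity
  linarith

lemma HH_int {k r : ℝ} : ∫ s in (0:ℝ)..r, hh k (s ^ 2) * s = HH k (r ^ 2) := by
  have hc := hh_cont k
  have d : ∀ s, HasDerivAt (fun s => HH k (s ^ 2)) (hh k (s ^ 2) * s) s := by
    intro s
    have := (HH_deriv k (s ^ 2)).comp s (hasDerivAt_pow 2 s)
    exact this.congr_deriv (by simp; ring)
  rw [intervalIntegral.integral_eq_sub_of_hasDerivAt (fun s _ => d s)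
    ((by fun_prop : Continuous fun s => hh k (s ^ 2) * s).intervalIntegrable _ _)]
  simp [HH_zero]

lemma pt_big {k s : ℝ} (hk : 10000 ≤ k) (h0 : 0 < s) (h2 : s ^ 2 ≤ 2) :
    √(gk k s) * √(1 + s ^ 2 * (1 / (hh k (s ^ 2) * s)) ^ 2)
      = s ^ 2 * (1 / (hh k (s ^ 2) * s)) + hh k (s ^ 2) * s := by
  have hf := ff_pos hk h0 h2
  have e := hh_key (k := k) (q := s ^ 2) (by linarith) (by positivity) (by nlinarith)
  rw [Real.sqrt_sq h0.le] at e
  obtain ⟨f, hfe⟩ : ∃ f, f = hh k (s ^ 2) * s := ⟨_, rfl⟩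
  have e2 : gk k s = s ^ 2 + f ^ 2 := by rw [← e, hfe]; ring
  rw [← hfe] at hf ⊢
  rw [e2]
  have e3 : 1 + s ^ 2 * (1 / f) ^ 2 = (s ^ 2 + f ^ 2) / f ^ 2 := by field_simp; ring
  rw [e3, Real.sqrt_div (by positivity), Real.sqrt_sq hf.le, ← mul_div_assoc,
    Real.mul_self_sqrt (by positivity)]
  field_simp

lemma pt_small {k s ε κ : ℝ} (hk : 10000 ≤ k) (h0 : 0 ≤ s) (h1 : s ≤ ε) (hε : ε ≤ 1) (hκ : 0 ≤ κ) :
    √(gk k s) * √(1 + s ^ 2 * κ ^ 2)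
      ≤ s ^ 2 * κ + k * ε + (k ^ 2 - 1) * ε ^ 2 / 2 * (s ^ 2 * κ) := by
  have hc : 0 ≤ k ^ 2 - 1 := by nlinarith
  have g : gk k s = s ^ 2 + (k ^ 2 - 1) * s ^ 4 := by unfold gk; rw [if_pos (by linarith)]
  have hs2 : s ^ 2 ≤ 1 := by nlinarith
  have a1 : √(gk k s) ≤ k * s := by
    rw [Real.sqrt_le_left (by positivity), g]
    have : (k ^ 2 - 1) * s ^ 2 * s ^ 2 ≤ (k ^ 2 - 1) * s ^ 2 * 1 := by gcongr
    nlinarith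
  have a2 : √(gk k s) ≤ s * (1 + (k ^ 2 - 1) * s ^ 2 / 2) := by
    rw [Real.sqrt_le_left (by positivity), g]
    have : 0 ≤ ((k ^ 2 - 1) * s ^ 3) ^ 2 := by positivity
    nlinarith
  have a3 : √(1 + s ^ 2 * κ ^ 2) ≤ 1 + s * κ := by
    rw [Real.sqrt_le_left (by positivity)]
    have : 0 ≤ s * κ := by positivity
    nlinarith
  calc √(gk k s) * √(1 + s ^ 2 * κ ^ 2) ≤ √(gk k s) * (1 + s * κ) := by gcongr
    _ = √(gk k s) + √(gk k s) * (s * κ) := by ring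
    _ ≤ k * s + s * (1 + (k ^ 2 - 1) * s ^ 2 / 2) * (s * κ) := by gcongr
    _ = k * s + s ^ 2 * κ + (k ^ 2 - 1) * s ^ 2 / 2 * (s ^ 2 * κ) := by ring
    _ ≤ k * ε + s ^ 2 * κ + (k ^ 2 - 1) * ε ^ 2 / 2 * (s ^ 2 * κ) := by gcongr
    _ = _ := by ring

set_option maxHeartbeats 1000000 in
lemma upper {k y A δ : ℝ} (hk : 10000 ≤ k) (hy0 : y ≤ 0) (hy : -y ≤ 8 / √(k ^ 2 - 1))
    (hA : 24 / √(k ^ 2 - 1) < A) (hδ : 0 < δ) :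
    ∃ (r : ℝ) (γ : ℝ → ℝ × ℝ), IsCurve (-r) r γ (-1, 0) (1, 0) ∧ sArea (-r) r γ = A ∧
      degLen (fun p => √(Wk k p)) (-r) r γ ≤ 2 * A + 2 * YY k y + δ := by
  obtain ⟨c0, c1, c2⟩ := cc_facts hk
  obtain ⟨c, hc⟩ : ∃ c, c = √(k ^ 2 - 1) := ⟨_, rfl⟩
  have hlb := fun s => ff_lb (s := s) hk
  rw [← hc] at c0 c1 c2 hy hA
  simp only [← hc] at hlb
  have hB : 16 / c < A + y := by
    have : 24 / c = 16 / c + 8 / c := by ring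
    linarith
  have h16 : 0 < 16 / c := by positivity
  have hy1 : -y ≤ 1 := hy.trans (by rw [div_le_one c0]; linarith)
  obtain ⟨r, hr⟩ : ∃ r, r = √(1 + y ^ 2) := ⟨_, rfl⟩
  have hr2 : r ^ 2 = 1 + y ^ 2 := by rw [hr, Real.sq_sqrt (by positivity)]
  have hr0 : 0 ≤ r := by rw [hr]; positivity
  have hr1 : 1 ≤ r := by nlinarith
  have hr22 : r ^ 2 ≤ 2 := by nlinarith
  have hr3 : r ≤ 2 := by nlinarith
  obtain ⟨M, hM⟩ : ∃ M, M = 4 * k + (k ^ 2 - 1) * (A + y) := ⟨_, rfl⟩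
  have hkk : 0 < k ^ 2 - 1 := by nlinarith
  have hM0 : 0 < M := by
    have : 0 < (k ^ 2 - 1) * (A + y) := mul_pos hkk (by linarith)
    rw [hM]; linarith
  obtain ⟨ε, hεd⟩ : ∃ ε, ε = min 1 (δ / M) := ⟨_, rfl⟩
  have hε0 : 0 < ε := by rw [hεd]; exact lt_min one_pos (by positivity)
  have hε1 : ε ≤ 1 := by rw [hεd]; exact min_le_left _ _
  have hεM : ε * M ≤ δ := by
    rw [← le_div_iff₀ hM0, hεd]; exact min_le_right _ _
  obtain ⟨σ, hσ⟩ : ∃ σ : ℝ → ℝ, σ = fun s => max ε (min s r) := ⟨_, rfl⟩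
  have hσc : Continuous σ := by rw [hσ]; fun_prop
  have hσ1 : ∀ s, 0 < σ s := fun s => by rw [hσ]; exact lt_max_of_lt_left hε0
  have hσ2 : ∀ s, σ s ^ 2 ≤ 2 := fun s => by
    have : σ s ≤ r := by rw [hσ]; exact max_le (by linarith) (min_le_right _ _)
    have := hσ1 s
    nlinarith
  have hσp := fun s => ff_pos hk (hσ1 s) (hσ2 s)
  obtain ⟨κ0, hκ0⟩ : ∃ κ0 : ℝ → ℝ, κ0 = fun s => 1 / (hh k (σ s ^ 2) * σ s) := ⟨_, rfl⟩
  have hhc := hh_cont k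
  have hκ0c : Continuous κ0 := by
    rw [hκ0]
    exact Continuous.div continuous_const (by fun_prop) fun s => (hσp s).ne'
  have hκ0p : ∀ s, 0 < κ0 s := fun s => by rw [hκ0]; exact one_div_pos.2 (hσp s)
  have hS : ∫ s in (0:ℝ)..r, s ^ 2 * κ0 s ≤ 16 / c := by
    calc ∫ s in (0:ℝ)..r, s ^ 2 * κ0 s ≤ ∫ s in (0:ℝ)..r, 8 / c := by
          refine intervalIntegral.integral_mono_on hr0
            ((by fun_prop : Continuous fun s => s ^ 2 * κ0 s).intervalIntegrable _ _) (by simp)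
            fun s hs => ?_
          have h1 : s ≤ σ s := by
            rw [hσ]; exact le_max_of_le_right (le_min le_rfl hs.2)
          have h2 := hlb (σ s) (hσ1 s).le (hσ2 s)
          have h3 : s ^ 2 ≤ σ s ^ 2 := by have := hs.1; gcongr
          rw [hκ0]
          simp only [mul_one_div]
          rw [div_le_div_iff₀ (hσp s) c0]
          nlinarith
      _ = r * (8 / c) := by simp; ring
      _ ≤ 2 * (8 / c) := by gcongr
      _ = 16 / c := by ring
  obtain ⟨b, hb⟩ : ∃ b, b = ∫ s in (0:ℝ)..r, s ^ 2 * max 0 (ε - s) := ⟨_, rfl⟩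
  have hb0 : 0 < b := by
    rw [hb]
    refine intervalIntegral.integral_pos (by linarith)
      (by fun_prop : Continuous fun s : ℝ => s ^ 2 * max 0 (ε - s)).continuousOn
      (fun s _ => by positivity) ⟨ε / 2, ⟨by linarith, by linarith⟩, ?_⟩
    rw [max_eq_right (by linarith)]
    have : 0 < ε - ε / 2 := by linarith
    positivity
  obtain ⟨K, hK⟩ : ∃ K, K = (A + y - ∫ s in (0:ℝ)..r, s ^ 2 * κ0 s) / b := ⟨_, rfl⟩
  have hK0 : 0 ≤ K := by rw [hK]; exact div_nonneg (by linarith) hb0.le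
  obtain ⟨κ, hκ⟩ : ∃ κ : ℝ → ℝ, κ = fun s => κ0 s + K * max 0 (ε - s) := ⟨_, rfl⟩
  have hκc : Continuous κ := by rw [hκ]; fun_prop
  have hκp : ∀ s, 0 ≤ κ s := fun s => by
    rw [hκ]; have := hκ0p s; positivity
  have hI : ∫ s in (0:ℝ)..r, s ^ 2 * κ s = A + y := by
    have : ∀ s, s ^ 2 * κ s = s ^ 2 * κ0 s + K * (s ^ 2 * max 0 (ε - s)) := fun s => by
      rw [hκ]; ring
    simp only [this]
    rw [intervalIntegral.integral_add
      ((by fun_prop : Continuous fun s => s ^ 2 * κ0 s).intervalIntegrable _ _)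
      ((by fun_prop : Continuous fun s : ℝ =>
        K * (s ^ 2 * max 0 (ε - s))).intervalIntegrable _ _),
      intervalIntegral.integral_const_mul, ← hb, hK]
    field_simp
    ring
  obtain ⟨γ, g1, g2, g3⟩ := spiral (k := k) (by linarith) (by linarith) hr2 hκc
  refine ⟨r, γ, g1, by rw [g2, hI]; ring, g3.trans ?_⟩
  have gc := gk_cont k
  have main : ∫ s in (0:ℝ)..r, √(gk k s) * √(1 + s ^ 2 * κ s ^ 2) ≤
      ∫ s in (0:ℝ)..r, ((1 + (k ^ 2 - 1) * ε ^ 2 / 2) * (s ^ 2 * κ s) +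
        (hh k (s ^ 2) * s + k * ε)) := by
    refine intervalIntegral.integral_mono_on hr0
      ((by fun_prop : Continuous fun s =>
        √(gk k s) * √(1 + s ^ 2 * κ s ^ 2)).intervalIntegrable _ _)
      ((by fun_prop : Continuous fun s => ((1 + (k ^ 2 - 1) * ε ^ 2 / 2) * (s ^ 2 * κ s) +
        (hh k (s ^ 2) * s + k * ε))).intervalIntegrable _ _) fun s hs => ?_
    have f0 : 0 ≤ hh k (s ^ 2) * s := mul_nonneg (hh_nonneg _ _) hs.1
    have k0 := hκp s
    rcases le_total s ε with h | h
    · have := pt_small hk hs.1 h hε1 k0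
      linarith
    · have e : κ s = 1 / (hh k (s ^ 2) * s) := by
        rw [hκ, hκ0]
        simp only
        rw [max_eq_left (by linarith : ε - s ≤ 0), hσ]
        simp only
        rw [min_eq_left hs.2, max_eq_right h]
        ring
      have s0 : 0 < s := by linarith
      have := pt_big hk s0 (by nlinarith [hs.2])
      rw [← e] at this
      rw [this]
      have : 0 ≤ (k ^ 2 - 1) * ε ^ 2 / 2 * (s ^ 2 * κ s) := by positivity
      have : 0 ≤ k * ε := by positivity
      linarith
  have hsum : ∫ s in (0:ℝ)..r, ((1 + (k ^ 2 - 1) * ε ^ 2 / 2) * (s ^ 2 * κ s) +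
        (hh k (s ^ 2) * s + k * ε)) =
      (1 + (k ^ 2 - 1) * ε ^ 2 / 2) * (A + y) + (HH k (1 + y ^ 2) + r * (k * ε)) := by
    rw [intervalIntegral.integral_add
      ((by fun_prop : Continuous fun s =>
        (1 + (k ^ 2 - 1) * ε ^ 2 / 2) * (s ^ 2 * κ s)).intervalIntegrable _ _)
      ((by fun_prop : Continuous fun s => hh k (s ^ 2) * s + k * ε).intervalIntegrable _ _),
      intervalIntegral.integral_add
      ((by fun_prop : Continuous fun s => hh k (s ^ 2) * s).intervalIntegrable _ _)
      (by simp), intervalIntegral.integral_const_mul, hI, HH_int, hr2]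
    simp; ring
  rw [hsum] at main
  have t1 : r * (k * ε) ≤ 2 * (k * ε) := by gcongr
  have t2 : (k ^ 2 - 1) * (A + y) * ε ^ 2 ≤ (k ^ 2 - 1) * (A + y) * ε := by
    have : 0 ≤ (k ^ 2 - 1) * (A + y) := mul_nonneg hkk.le (by linarith)
    apply mul_le_mul_of_nonneg_left _ this
    rw [sq]
    exact mul_le_of_le_one_left hε0.le hε1
  have t3 : ε * M = 4 * (k * ε) + (k ^ 2 - 1) * (A + y) * ε := by rw [hM]; ring
  have t4 : (1 + (k ^ 2 - 1) * ε ^ 2 / 2) * (A + y) =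
      (A + y) + ((k ^ 2 - 1) * (A + y) * ε ^ 2) / 2 := by ring
  unfold YY
  linarith

lemma YY_cont (k : ℝ) : Continuous (YY k) := by
  have := (HH_contDiff k).continuous
  unfold YY
  fun_prop

lemma YY_zero_le {k : ℝ} (hk : 1 ≤ k) : YY k 0 ≤ k / 2 := by
  have : YY k 0 = HH k 1 := by simp [YY]
  rw [this]
  unfold HH
  have hc : Continuous (fun s => hh k s / 2) := (hh_cont k).div_const 2
  calc ∫ s in (0:ℝ)..1, hh k s / 2 ≤ ∫ s in (0:ℝ)..1, k / 2 := by
        refine intervalIntegral.integral_mono_on zero_le_one (hc.intervalIntegrable _ _) (by simp)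
          fun s hs => ?_
        have h1 := hh_le hk hs.1
        have h2 : √s ≤ 1 := Real.sqrt_le_one.2 hs.2
        nlinarith
    _ = k / 2 := by simp

theorem two_well_nonexistence :
    ∃ C > (0:ℝ), ∃ k0 > (1:ℝ), ∃ A1 A2 : ℝ → ℝ,
      Tendsto A2 atTop atTop ∧
      ∀ k ≥ k0, 0 < A1 k ∧ A1 k < A2 k ∧ A1 k ≤ C / Real.sqrt (k ^ 2 - 1) ∧
        ∀ A ∈ Set.Ioo (A1 k) (A2 k),
          ¬ ∃ a b γ, IsCurve a b γ (-1, 0) (1, 0) ∧ sArea a b γ = A ∧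
            ∀ a' b' γ', IsCurve a' b' γ' (-1, 0) (1, 0) → sArea a' b' γ' = A →
              degLen (fun p => Real.sqrt (Wk k p)) a b γ ≤
                degLen (fun p => Real.sqrt (Wk k p)) a' b' γ' := by
  refine ⟨24, by norm_num, 10000, by norm_num, fun k => 24 / √(k ^ 2 - 1), fun k => k / 2,
    tendsto_id.atTop_div_const (by norm_num), ?_⟩
  intro k hk
  obtain ⟨c0, c1, c2⟩ := cc_facts hk
  refine ⟨by positivity, ?_, le_rfl, ?_⟩
  · have : 24 / √(k ^ 2 - 1) ≤ 1 := by rw [div_le_one c0]; linarith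
    change 24 / √(k ^ 2 - 1) < k / 2
    linarith
  rintro A ⟨hA1, hA2⟩ ⟨a, b, γ, hγ, hA, hmin⟩
  obtain ⟨y, hy, hymin⟩ := (isCompact_Icc (a := (-3:ℝ)) (b := 3)).exists_isMinOn
    ⟨0, by norm_num, by norm_num⟩ (YY_cont k).continuousOn
  have hym : ∀ z ∈ Icc (-3:ℝ) 3, YY k y ≤ YY k z := fun z hz => hymin hz
  have hy00 := hym 0 ⟨by norm_num, by norm_num⟩
  obtain ⟨hy0, hy1⟩ := ys_facts hk hy hy00
  have hE : degLen (fun p => √(Wk k p)) a b γ ≤ 2 * A + 2 * YY k y := by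
    refine le_of_forall_pos_le_add fun δ hδ => ?_
    obtain ⟨r, η, h1, h2, h3⟩ := upper hk hy0 hy1 hA1 hδ
    exact (hmin _ _ _ h1 h2).trans h3
  have h0 := YY_zero_le (k := k) (by linarith)
  have hA2' : A < k / 2 := hA2
  have := lower hk hγ (by linarith) hym
  rw [hA] at this
  linarith
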